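/- arXiv:1605.04812 — 4 statements merged into one kernel-verified Lean document; each statement's English description precedes it below -/
import Mathlib

section
/- For any finitely supported probability distribution μ on a set S of slates, with G the Moore–Penrose pseudoinverse of Γ_μ, one has q_μᵀ G 1_s = 1 for every slate s with μ(s) > 0. -/
/-!
Let `v` be the indicator of the coordinates of one fixed slot. Every slate picks exactly one
action in that slot, so `1_t ⬝ v = 1` for all slates `t`, and hence `Γ v = q`. Since `Γ` is
symmetric, `q ⬝ G 1_s = v ⬝ Γ G 1_s`, so it suffices that the orthogonal projection `Γ G` onto
the range of `Γ` fixes `1_s` when `μ s > 0`. The residual `w = 1_s - Γ G 1_s` lies in the kernel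
of `Γ`, so `0 = w ⬝ Γ w = ∑ t, μ t (1_t ⬝ w)²`, which forces `1_s ⬝ w = 0`
(`slateInd_dotProduct_eq_zero`). As `w` is also orthogonal to the range of `Γ`, it follows that
`w ⬝ w = 0`.
-/

open Matrix BigOperators

/-- Indicator vector of a slate `s : Fin ℓ → A` in `ℝ^{(Fin ℓ) × A}`. -/
noncomputable def slateInd {ℓ : ℕ} {A : Type*} [DecidableEq A] (s : Fin ℓ → A) :
    Fin ℓ × A → ℝ :=
  fun p => if s p.1 = p.2 then 1 else 0

/-- Second-moment matrix `Γ_μ := Σ_s μ(s)·1_s 1_sᵀ` of a distribution `μ` on slates. -/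
noncomputable def slateGamma {ℓ : ℕ} {A : Type*} [Fintype A] [DecidableEq A]
    (μ : (Fin ℓ → A) → ℝ) : Matrix (Fin ℓ × A) (Fin ℓ × A) ℝ :=
  ∑ s : Fin ℓ → A, μ s • vecMulVec (slateInd s) (slateInd s)

/-- Marginal vector `q_μ := Σ_s μ(s)·1_s`. -/
noncomputable def slateQ {ℓ : ℕ} {A : Type*} [Fintype A] [DecidableEq A]
    (μ : (Fin ℓ → A) → ℝ) : Fin ℓ × A → ℝ :=
  ∑ s : Fin ℓ → A, μ s • slateInd s

theorem slateGamma_mulVec {ℓ : ℕ} {A : Type*} [Fintype A] [DecidableEq A]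
    (μ : (Fin ℓ → A) → ℝ) (x : Fin ℓ × A → ℝ) :
    slateGamma μ *ᵥ x = ∑ t, (μ t * (slateInd t ⬝ᵥ x)) • slateInd t := by
  simp only [slateGamma, sum_mulVec, smul_mulVec, vecMulVec_mulVec, op_smul_eq_smul, smul_smul]

theorem slateGamma_transpose {ℓ : ℕ} {A : Type*} [Fintype A] [DecidableEq A]
    (μ : (Fin ℓ → A) → ℝ) : (slateGamma μ)ᵀ = slateGamma μ := by
  simp only [slateGamma, transpose_sum, transpose_smul, transpose_vecMulVec]

theorem slateGamma_mulVec_dotProduct {ℓ : ℕ} {A : Type*} [Fintype A] [DecidableEq A]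
    (μ : (Fin ℓ → A) → ℝ) (x y : Fin ℓ × A → ℝ) :
    (slateGamma μ *ᵥ x) ⬝ᵥ y = x ⬝ᵥ (slateGamma μ *ᵥ y) := by
  rw [dotProduct_mulVec, ← mulVec_transpose, slateGamma_transpose]

/-- The kernel of `Γ_μ` is orthogonal to the indicator of every slate in the support of `μ`,
because the quadratic form of `Γ_μ` is `∑ t, μ t (1_t ⬝ w)²`. -/
theorem slateInd_dotProduct_eq_zero {ℓ : ℕ} {A : Type*} [Fintype A] [DecidableEq A]
    (μ : (Fin ℓ → A) → ℝ) (hμ0 : ∀ s, 0 ≤ μ s) (w : Fin ℓ × A → ℝ)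
    (hw : slateGamma μ *ᵥ w = 0) (s : Fin ℓ → A) (hs : 0 < μ s) :
    slateInd s ⬝ᵥ w = 0 := by
  have h : ∑ t, μ t * (slateInd t ⬝ᵥ w) ^ 2 = 0 := by
    have h0 : (slateGamma μ *ᵥ w) ⬝ᵥ w = 0 := by rw [hw, zero_dotProduct]
    rw [slateGamma_mulVec, sum_dotProduct] at h0
    rw [← h0]
    refine Finset.sum_congr rfl fun t _ => ?_
    rw [smul_dotProduct, smul_eq_mul]
    ring
  have h1 := (Finset.sum_eq_zero_iff_of_nonneg
    (fun t _ => mul_nonneg (hμ0 t) (sq_nonneg _))).1 h s (Finset.mem_univ s)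
  simpa [hs.ne'] using h1

theorem slateInd_dotProduct_slot {ℓ : ℕ} {A : Type*} [Fintype A] [DecidableEq A]
    (j : Fin ℓ) (t : Fin ℓ → A) :
    slateInd t ⬝ᵥ (fun p : Fin ℓ × A => if p.1 = j then (1 : ℝ) else 0) = 1 := by
  simp [slateInd, dotProduct, Fintype.sum_prod_type]

/-- for any finitely supported probability distribution `μ` on slates,
with `G` the Moore–Penrose pseudoinverse of `Γ_μ`, one has `q_μᵀ G 1_s = 1` for every
slate `s` with `μ(s) > 0`. -/
theorem qMu_pseudoinverse_ind_eq_one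
    {ℓ : ℕ} (hℓ : 1 ≤ ℓ) {A : Type*} [Fintype A] [DecidableEq A]
    (μ : (Fin ℓ → A) → ℝ) (hμ0 : ∀ s, 0 ≤ μ s) (hμ1 : ∑ s : Fin ℓ → A, μ s = 1)
    (G : Matrix (Fin ℓ × A) (Fin ℓ × A) ℝ)
    (hG1 : slateGamma μ * G * slateGamma μ = slateGamma μ)
    (hG2 : G * slateGamma μ * G = G)
    (hG3 : (slateGamma μ * G)ᵀ = slateGamma μ * G)
    (hG4 : (G * slateGamma μ)ᵀ = G * slateGamma μ)
    (s : Fin ℓ → A) (hs : 0 < μ s) :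
    slateQ μ ⬝ᵥ G.mulVec (slateInd s) = 1 := by
  set v : Fin ℓ × A → ℝ := fun p => if p.1 = ⟨0, hℓ⟩ then (1 : ℝ) else 0 with hv
  have hq : slateGamma μ *ᵥ v = slateQ μ := by
    simp only [slateGamma_mulVec, hv, slateInd_dotProduct_slot, mul_one, slateQ]
  set w : Fin ℓ × A → ℝ := slateInd s - slateGamma μ *ᵥ (G *ᵥ slateInd s) with hw
  -- Transposing `Γ G Γ = Γ` and using the symmetry of `Γ` and of `Γ G`.
  have hΓ : slateGamma μ * (slateGamma μ * G) = slateGamma μ := by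
    have h := congrArg transpose hG1
    rwa [transpose_mul, hG3, slateGamma_transpose] at h
  have hker : slateGamma μ *ᵥ w = 0 := by
    rw [hw, mulVec_sub, mulVec_mulVec, mulVec_mulVec, Matrix.mul_assoc, hΓ, sub_self]
  have hsw := slateInd_dotProduct_eq_zero μ hμ0 w hker s hs
  have hww : w ⬝ᵥ w = 0 := by
    nth_rewrite 1 [hw]
    rw [sub_dotProduct, hsw, slateGamma_mulVec_dotProduct, hker, dotProduct_zero, sub_zero]
  have hfix : slateGamma μ *ᵥ (G *ᵥ slateInd s) = slateInd s :=
    (sub_eq_zero.1 (dotProduct_self_eq_zero.1 hww)).symm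
  rw [← hq, slateGamma_mulVec_dotProduct, hfix, dotProduct_comm, hv, slateInd_dotProduct_slot]
end

section
/- (Pseudoinverse estimator formula for uniform Cartesian logging.) Let ν be the uniform distribution over the slate space Π_j Fin m_j, G the Moore–Penrose pseudoinverse of Γ_ν, and π any probability distribution on slates with q_π := Σ_t π(t)·1_t. Then for every slate s and every real r ∈ [−1,1], q_πᵀ G (r·1_s) = r·( Σ_j m_j · P_{t∼π}(t_j = s_j) − ℓ + 1 ). -/
/-!
The argument rests on an explicit preimage of `1_s` under `Γ_ν`. For a slate `s` put
`x_s(k, a) = m_k·[s_k = a] - (ℓ - 1)/ℓ`, so that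
`1_t · x_s = Σ_k (m_k·[t_k = s_k] - 1) + 1` for every slate `t`. Under the uniform distribution
each summand `m_k·[t_k = s_k] - 1` has mean zero and is independent of the other coordinates
(`card_mul_sum_indicator`), so correlating `1_t · x_s` with `[t_j = a]` leaves only the term
`k = j` and the constant `1`, which gives `Γ_ν x_s = 1_s` (`cartGamma_mulVec_cartPre`). Since `Γ_ν` is symmetric and
`Γ G Γ = Γ`, it follows that `1_tᵀ G 1_s = x_tᵀ Γ G Γ x_s = x_tᵀ Γ x_s = 1_t · x_s`, and averaging
over `t ∼ π` is the claim.
-/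

open Matrix BigOperators
open scoped Classical

/-- Indicator vector of a slate on a Cartesian product slate space,
indexed by pairs `(j, a)` with `a ∈ Fin (m j)`. -/
noncomputable def cartInd {ℓ : ℕ} {m : Fin ℓ → ℕ} (s : (j : Fin ℓ) → Fin (m j)) :
    (Σ j : Fin ℓ, Fin (m j)) → ℝ :=
  fun p => if s p.1 = p.2 then 1 else 0

/-- Second-moment matrix `Γ_μ := Σ_s μ(s)·1_s 1_sᵀ` of a distribution `μ`
on the Cartesian product slate space. -/
noncomputable def cartGamma {ℓ : ℕ} {m : Fin ℓ → ℕ}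
    (μ : ((j : Fin ℓ) → Fin (m j)) → ℝ) :
    Matrix (Σ j : Fin ℓ, Fin (m j)) (Σ j : Fin ℓ, Fin (m j)) ℝ :=
  ∑ s : (j : Fin ℓ) → Fin (m j), μ s • vecMulVec (cartInd s) (cartInd s)

/-- Conditioning on `t k = b` has no effect on the uniform average of a function `g` that does not
depend on coordinate `k`: swapping the values `b` and `c` in that coordinate matches the slates
with `t k = b` and those with `t k = c`. -/
lemma card_mul_sum_indicator {ℓ : ℕ} {m : Fin ℓ → ℕ} (k : Fin ℓ) (b : Fin (m k))
    (g : ((j : Fin ℓ) → Fin (m j)) → ℝ) (hg : ∀ t c, g (Function.update t k c) = g t) :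
    (m k : ℝ) * ∑ t, g t * (if t k = b then 1 else 0) = ∑ t, g t := by
  have key : ∀ c : Fin (m k), ∑ t, g t * (if t k = c then (1 : ℝ) else 0)
      = ∑ t, g t * (if t k = b then 1 else 0) := by
    intro c
    have hinv : Function.Involutive
        (fun t : (j : Fin ℓ) → Fin (m j) => Function.update t k (Equiv.swap b c (t k))) := by
      intro t
      simp
    refine Fintype.sum_equiv hinv.toPerm _ _ fun t => ?_
    have h : (Equiv.swap b c (t k) = b) ↔ t k = c := by
      rw [← Equiv.eq_symm_apply]
      simp
    simp [Function.Involutive.toPerm, hg, h]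
  calc (m k : ℝ) * ∑ t, g t * (if t k = b then 1 else 0)
      = ∑ c : Fin (m k), ∑ t, g t * (if t k = c then (1 : ℝ) else 0) := by
        simp only [key, Finset.sum_const, Finset.card_univ, Fintype.card_fin, nsmul_eq_mul]
    _ = ∑ t, g t := by
        rw [Finset.sum_comm]
        simp

/-- The vector `x_s(k, a) = m_k·[s_k = a] - (ℓ - 1)/ℓ`, a preimage of `1_s` under the uniform
second-moment matrix. -/
noncomputable def cartPre {ℓ : ℕ} {m : Fin ℓ → ℕ} (s : (j : Fin ℓ) → Fin (m j)) :
    (Σ j : Fin ℓ, Fin (m j)) → ℝ :=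
  fun p => (m p.1 : ℝ) * cartInd s p - ((ℓ : ℝ) - 1) / ℓ

lemma cartInd_dotProduct {ℓ : ℕ} {m : Fin ℓ → ℕ} (t : (j : Fin ℓ) → Fin (m j))
    (x : (Σ j : Fin ℓ, Fin (m j)) → ℝ) : cartInd t ⬝ᵥ x = ∑ k, x ⟨k, t k⟩ := by
  simp [dotProduct, cartInd, Fintype.sum_sigma]

lemma cartInd_dotProduct_cartPre {ℓ : ℕ} (hℓ : 1 ≤ ℓ) {m : Fin ℓ → ℕ}
    (t s : (j : Fin ℓ) → Fin (m j)) :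
    cartInd t ⬝ᵥ cartPre s
      = (∑ k, ((m k : ℝ) * (if t k = s k then 1 else 0) - 1)) + 1 := by
  have h0 : (ℓ : ℝ) ≠ 0 := by positivity
  rw [cartInd_dotProduct]
  simp only [cartPre, cartInd, Finset.sum_sub_distrib, Finset.sum_const, Finset.card_univ,
    Fintype.card_fin, nsmul_eq_mul, mul_div_cancel₀ _ h0, eq_comm (a := s _)]
  ring

lemma cartGamma_mulVec {ℓ : ℕ} {m : Fin ℓ → ℕ} (μ : ((j : Fin ℓ) → Fin (m j)) → ℝ)
    (x : (Σ j : Fin ℓ, Fin (m j)) → ℝ) (p : Σ j : Fin ℓ, Fin (m j)) :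
    (cartGamma μ *ᵥ x) p = ∑ t, μ t * (cartInd t p * (cartInd t ⬝ᵥ x)) := by
  simp only [cartGamma, Matrix.sum_mulVec, Finset.sum_apply, Matrix.smul_mulVec,
    Matrix.vecMulVec_mulVec, Pi.smul_apply, smul_eq_mul, MulOpposite.smul_eq_mul_unop,
    MulOpposite.unop_op]

lemma cartGamma_transpose {ℓ : ℕ} {m : Fin ℓ → ℕ} (μ : ((j : Fin ℓ) → Fin (m j)) → ℝ) :
    (cartGamma μ)ᵀ = cartGamma μ := by
  simp only [cartGamma, Matrix.transpose_sum, Matrix.transpose_smul, Matrix.transpose_vecMulVec]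

lemma cartGamma_mulVec_cartPre {ℓ : ℕ} (hℓ : 1 ≤ ℓ) {m : Fin ℓ → ℕ}
    (ν : ((j : Fin ℓ) → Fin (m j)) → ℝ)
    (hν : ∀ s, ν s = ((Fintype.card ((j : Fin ℓ) → Fin (m j)) : ℝ))⁻¹)
    (s : (j : Fin ℓ) → Fin (m j)) :
    cartGamma ν *ᵥ cartPre s = cartInd s := by
  have hC : (Fintype.card ((j : Fin ℓ) → Fin (m j)) : ℝ) ≠ 0 := by
    have : Nonempty ((j : Fin ℓ) → Fin (m j)) := ⟨s⟩
    exact_mod_cast Fintype.card_ne_zero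
  ext ⟨j, a⟩
  rw [cartGamma_mulVec]
  simp only [hν, ← Finset.mul_sum, cartInd_dotProduct_cartPre hℓ]
  rw [inv_mul_eq_iff_eq_mul₀ hC]
  -- Centred terms in the coordinates `k ≠ j` are uncorrelated with `[t j = a]`.
  have hzero : ∀ k, k ≠ j →
      ∑ t : (j : Fin ℓ) → Fin (m j),
        cartInd t ⟨j, a⟩ * ((m k : ℝ) * (if t k = s k then 1 else 0) - 1) = 0 := by
    intro k hk
    have h := card_mul_sum_indicator k (s k) (fun t => cartInd t ⟨j, a⟩)
      (fun t c => by simp [cartInd, Function.update_of_ne hk.symm])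
    rw [Finset.mul_sum] at h
    simp only [mul_sub, mul_one, Finset.sum_sub_distrib]
    rw [← h, sub_eq_zero]
    exact Finset.sum_congr rfl fun t _ => by ring
  have hone : (m j : ℝ) * ∑ t : (j : Fin ℓ) → Fin (m j), (if t j = s j then (1 : ℝ) else 0)
      = Fintype.card ((j : Fin ℓ) → Fin (m j)) := by
    simpa using card_mul_sum_indicator j (s j) (fun _ => (1 : ℝ)) (fun _ _ => rfl)
  simp only [mul_add, Finset.mul_sum, Finset.sum_add_distrib, mul_one]
  rw [Finset.sum_comm, Finset.sum_eq_single j (fun k _ hk => hzero k hk) (by simp),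
    ← Finset.sum_add_distrib, ← hone, mul_assoc, Finset.sum_mul, Finset.mul_sum]
  refine Finset.sum_congr rfl fun t _ => ?_
  simp only [cartInd]
  by_cases h1 : t j = s j
  · simp only [h1, if_true]
    ring
  · simp [h1]

lemma cartInd_dotProduct_pinv {ℓ : ℕ} (hℓ : 1 ≤ ℓ) {m : Fin ℓ → ℕ}
    (ν : ((j : Fin ℓ) → Fin (m j)) → ℝ)
    (hν : ∀ s, ν s = ((Fintype.card ((j : Fin ℓ) → Fin (m j)) : ℝ))⁻¹)
    (G : Matrix (Σ j : Fin ℓ, Fin (m j)) (Σ j : Fin ℓ, Fin (m j)) ℝ)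
    (hG1 : cartGamma ν * G * cartGamma ν = cartGamma ν)
    (t s : (j : Fin ℓ) → Fin (m j)) :
    cartInd t ⬝ᵥ G *ᵥ cartInd s = cartInd t ⬝ᵥ cartPre s := by
  have ht : cartInd t = cartPre t ᵥ* cartGamma ν := by
    rw [← Matrix.mulVec_transpose, cartGamma_transpose, cartGamma_mulVec_cartPre hℓ ν hν]
  rw [← cartGamma_mulVec_cartPre hℓ ν hν s, ht, ← Matrix.dotProduct_mulVec,
    Matrix.mulVec_mulVec, Matrix.mulVec_mulVec, hG1,
    ← Matrix.dotProduct_mulVec]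

/-- (Pseudoinverse estimator formula for uniform Cartesian logging.)
With `ν` uniform, `G` the Moore–Penrose pseudoinverse of `Γ_ν`, and `π` any
distribution on slates, for every slate `s` and every `r ∈ [−1,1]`:
`q_πᵀ G (r·1_s) = r·(Σ_j m_j·P_{t∼π}(t_j = s_j) − ℓ + 1)`. -/
theorem uniform_cartesian_estimator_formula
    {ℓ : ℕ} (hℓ : 1 ≤ ℓ) (m : Fin ℓ → ℕ) (hm : ∀ j, 1 ≤ m j)
    (ν : ((j : Fin ℓ) → Fin (m j)) → ℝ)
    (hν : ∀ s, ν s = ((Fintype.card ((j : Fin ℓ) → Fin (m j)) : ℝ))⁻¹)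
    (G : Matrix (Σ j : Fin ℓ, Fin (m j)) (Σ j : Fin ℓ, Fin (m j)) ℝ)
    (hG1 : cartGamma ν * G * cartGamma ν = cartGamma ν)
    (hG2 : G * cartGamma ν * G = G)
    (hG3 : (cartGamma ν * G)ᵀ = cartGamma ν * G)
    (hG4 : (G * cartGamma ν)ᵀ = G * cartGamma ν)
    (π : ((j : Fin ℓ) → Fin (m j)) → ℝ)
    (hπ0 : ∀ t, 0 ≤ π t) (hπ1 : ∑ t : (j : Fin ℓ) → Fin (m j), π t = 1)
    (s : (j : Fin ℓ) → Fin (m j)) (r : ℝ) (hr1 : -1 ≤ r) (hr2 : r ≤ 1) :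
    (∑ t : (j : Fin ℓ) → Fin (m j), π t • cartInd t) ⬝ᵥ G.mulVec (r • cartInd s)
      = r * ((∑ j : Fin ℓ, (m j : ℝ) *
          (∑ t : (j : Fin ℓ) → Fin (m j), if t j = s j then π t else 0))
          - (ℓ : ℝ) + 1) := by
  rw [Matrix.mulVec_smul, dotProduct_smul, smul_eq_mul, sum_dotProduct]
  congr 1
  simp only [smul_dotProduct, smul_eq_mul, cartInd_dotProduct_pinv hℓ ν hν G hG1,
    cartInd_dotProduct_cartPre hℓ, Finset.sum_sub_distrib, Finset.sum_const, Finset.card_univ,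
    Fintype.card_fin, nsmul_eq_mul, mul_one, mul_add, mul_sub, Finset.sum_add_distrib,
    ← Finset.sum_mul, hπ1, one_mul]
  congr 2
  simp only [Finset.mul_sum]
  rw [Finset.sum_comm]
  refine Finset.sum_congr rfl fun j _ => Finset.sum_congr rfl fun t _ => ?_
  split_ifs <;> ring
end

section
/- (Pairwise slate form and estimator formula for uniform full-ranking logging, case ℓ = m.) Let ℓ = m ≥ 1, let ν be the uniform distribution over rankings (bijections Fin m → Fin m), and let G be the Moore–Penrose pseudoinverse of Γ_ν. Then for all rankings s and s', 1_{s'}ᵀ G 1_s = (m−1)·|{j : s'_j = s_j}| − m + 2; in particular 1_sᵀ G 1_s = m² − 2m + 2 for every ranking s; and for any probability distribution π on rankings with q_π := Σ_t π(t)·1_t, any ranking s and any real r ∈ [−1,1]: q_πᵀ G (r·1_s) = r·( (m−1)·Σ_j P_{t∼π}(t_j = s_j) − m + 2 ). -/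
/-!
The matrix `Γ = Γ_ν` is invariant under relabelling of the actions. Together with
`Σ_b Γ (j,a) (k,b) = Γ (j,a) (j,a)` and `Σ_a Γ (j,a) (j,a) = 1` this determines its entries:
`Γ (j,a) (j,a) = 1/m`, `Γ (j,a) (k,b) = 1/(m(m-1))` for `j ≠ k`, `a ≠ b`, and all others vanish.
Hence `(m-1) Γ 1_s = 1_s + ((m-2)/m) 1` (valid also for `m = 1`) and `Γ 1 = 1`, where `1` is the
all-ones vector, so that `w_s := (m-1) 1_s - ((m-2)/m) 1` satisfies `Γ w_s = 1_s`.
As `Γ` is symmetric and `Γ G Γ = Γ`, it follows that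
`1_{s'}ᵀ G 1_s = w_{s'}ᵀ Γ G Γ w_s = w_{s'}ᵀ 1_s`, which is the claimed pairwise form. The diagonal
form and the estimator formula follow by specialisation and linearity.
-/

open Matrix BigOperators
open scoped Classical

/-- Indicator vector of a slate `s : Fin ℓ → Fin m` in `ℝ^{(Fin ℓ) × (Fin m)}`. -/
noncomputable def rankInd {ℓ m : ℕ} (s : Fin ℓ → Fin m) : Fin ℓ × Fin m → ℝ :=
  fun p => if s p.1 = p.2 then 1 else 0

/-- Second-moment matrix `Γ_ν := Σ_s ν(s)·1_s 1_sᵀ` of the uniform distribution `ν`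
over rankings (injective functions `Fin ℓ → Fin m`). -/
noncomputable def rankGammaUnif (ℓ m : ℕ) :
    Matrix (Fin ℓ × Fin m) (Fin ℓ × Fin m) ℝ :=
  ∑ s : {s : Fin ℓ → Fin m // Function.Injective s},
    ((Fintype.card {s : Fin ℓ → Fin m // Function.Injective s} : ℝ))⁻¹ •
      vecMulVec (rankInd s.1) (rankInd s.1)

/-- The 0/1 vector `1_j` supported on all coordinates `(j,a)` of slot `j`. -/
noncomputable def rankOneJ {ℓ m : ℕ} (j : Fin ℓ) : Fin ℓ × Fin m → ℝ :=
  fun p => if p.1 = j then 1 else 0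

/-- The 0/1 vector `1_a` supported on all coordinates `(j,a)` for the fixed action `a`. -/
noncomputable def rankOneA {ℓ m : ℕ} (a : Fin m) : Fin ℓ × Fin m → ℝ :=
  fun p => if p.2 = a then 1 else 0

/-- The all-ones vector. -/
noncomputable def rankOnes (ℓ m : ℕ) : Fin ℓ × Fin m → ℝ := fun _ => 1

lemma rankGamma_apply {m : ℕ} (p q : Fin m × Fin m) :
    rankGammaUnif m m p q
      = ((Fintype.card {s : Fin m → Fin m // Function.Injective s} : ℝ))⁻¹ *
        ∑ s : {s : Fin m → Fin m // Function.Injective s}, rankInd s.1 p * rankInd s.1 q := by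
  simp [rankGammaUnif, Matrix.sum_apply, vecMulVec_apply, Finset.mul_sum]

lemma rankGamma_symm {m : ℕ} : (rankGammaUnif m m)ᵀ = rankGammaUnif m m := by
  ext p q
  simp only [transpose_apply, rankGamma_apply, mul_comm]

/-- Invariance under relabelling of the actions: postcomposition with a permutation is a
bijection of the set of rankings. -/
lemma rankGamma_perm {m : ℕ} (σ : Equiv.Perm (Fin m)) (j k a b : Fin m) :
    rankGammaUnif m m (j, σ a) (k, σ b) = rankGammaUnif m m (j, a) (k, b) := by
  rw [rankGamma_apply, rankGamma_apply]
  congr 1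
  symm
  refine Fintype.sum_equiv
    ((Equiv.arrowCongr (Equiv.refl (Fin m)) σ).subtypeEquiv (fun s => ?_)) _ _ (fun s => ?_)
  · simp [Equiv.arrowCongr]
  · simp [rankInd, Equiv.arrowCongr]

lemma rankInd_sum_slot {m : ℕ} (s : Fin m → Fin m) (k : Fin m) :
    ∑ b, rankInd s (k, b) = 1 := by
  simp [rankInd]

lemma rankInd_sum_action {m : ℕ} (s : Fin m → Fin m) (hs : Function.Injective s) (a : Fin m) :
    ∑ k, rankInd s (k, a) = 1 := by
  obtain ⟨k, rfl⟩ := (Finite.injective_iff_surjective.mp hs) a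
  simp [rankInd, hs.eq_iff]

lemma rankGamma_same_slot {m : ℕ} (j a b : Fin m) (hab : a ≠ b) :
    rankGammaUnif m m (j, a) (j, b) = 0 := by
  rw [rankGamma_apply, Finset.sum_eq_zero, mul_zero]
  intro s _
  simp only [rankInd]
  grind

lemma rankGamma_same_action {m : ℕ} (j k a : Fin m) (hjk : j ≠ k) :
    rankGammaUnif m m (j, a) (k, a) = 0 := by
  rw [rankGamma_apply, Finset.sum_eq_zero, mul_zero]
  intro s _
  have := fun h => hjk (@s.2 j k h)
  simp only [rankInd]
  grind

/-- Summing out the action of a second slot leaves the marginal of the first one. -/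
lemma rankGamma_sum {m : ℕ} (j k a : Fin m) :
    ∑ b, rankGammaUnif m m (j, a) (k, b) = rankGammaUnif m m (j, a) (j, a) := by
  simp only [rankGamma_apply]
  rw [← Finset.mul_sum, Finset.sum_comm]
  congr 1
  refine Finset.sum_congr rfl fun s _ => ?_
  rw [← Finset.mul_sum, rankInd_sum_slot]
  simp [rankInd]

lemma rankGamma_diag {m : ℕ} (j a : Fin m) :
    rankGammaUnif m m (j, a) (j, a) = (m : ℝ)⁻¹ := by
  have hm : (m : ℝ) ≠ 0 := by exact_mod_cast (Fin.pos j).ne'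
  have hconst : ∀ b, rankGammaUnif m m (j, b) (j, b) = rankGammaUnif m m (j, a) (j, a) := by
    intro b
    simpa using rankGamma_perm (Equiv.swap a b) j j a a
  have hsum : ∑ b, rankGammaUnif m m (j, b) (j, b) = 1 := by
    simp only [rankGamma_apply]
    rw [← Finset.mul_sum, Finset.sum_comm]
    have h1 : ∀ s : {s : Fin m → Fin m // Function.Injective s},
        ∑ b, rankInd s.1 (j, b) * rankInd s.1 (j, b) = 1 := by
      intro s
      simp [rankInd]
    have : Nonempty {s : Fin m → Fin m // Function.Injective s} :=
      ⟨⟨id, Function.injective_id⟩⟩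
    simp only [h1, Finset.sum_const, Finset.card_univ, nsmul_eq_mul, mul_one]
    exact inv_mul_cancel₀ (by exact_mod_cast Fintype.card_ne_zero)
  simp only [hconst, Finset.sum_const, Finset.card_univ, Fintype.card_fin, nsmul_eq_mul] at hsum
  exact eq_inv_of_mul_eq_one_right hsum

/-- For distinct slots the `m - 1` entries with `b ≠ a` are equal and sum to `1/m`. -/
lemma rankGamma_off {m : ℕ} (j k a b : Fin m) (hjk : j ≠ k) (hab : a ≠ b) :
    ((m : ℝ) - 1) * rankGammaUnif m m (j, a) (k, b) = (m : ℝ)⁻¹ := by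
  have hsum := rankGamma_sum j k a
  rw [rankGamma_diag, ← Finset.add_sum_erase _ _ (Finset.mem_univ a),
    rankGamma_same_action j k a hjk, zero_add] at hsum
  have hconst : ∀ c ∈ Finset.univ.erase a,
      rankGammaUnif m m (j, a) (k, c) = rankGammaUnif m m (j, a) (k, b) := by
    intro c hc
    have h := rankGamma_perm (Equiv.swap b c) j k a b
    rwa [Equiv.swap_apply_left,
      Equiv.swap_apply_of_ne_of_ne hab (Finset.ne_of_mem_erase hc).symm] at h
  rw [Finset.sum_congr rfl hconst, Finset.sum_const, nsmul_eq_mul,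
    Finset.card_erase_of_mem (Finset.mem_univ a), Finset.card_univ, Fintype.card_fin,
    Nat.cast_sub (Fin.pos j), Nat.cast_one] at hsum
  exact hsum

/-- All entries of `Γ` in one formula; the factor `m - 1` keeps it valid for `m = 1`. -/
lemma rankGamma_entry {m : ℕ} (j k a b : Fin m) :
    ((m : ℝ) - 1) * rankGammaUnif m m (j, a) (k, b)
      = (m : ℝ)⁻¹ * (1 - (if k = j then 1 else 0) - (if b = a then 1 else 0)
          + (if k = j then (m : ℝ) * (if b = a then 1 else 0) else 0)) := by
  by_cases hjk : k = j
  · subst hjk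
    by_cases hab : b = a
    · subst hab
      rw [rankGamma_diag]
      simp
      ring
    · rw [rankGamma_same_slot _ _ _ (Ne.symm hab)]
      simp [hab]
  · by_cases hab : b = a
    · subst hab
      rw [rankGamma_same_action _ _ _ (Ne.symm hjk)]
      simp [hjk]
    · rw [rankGamma_off _ _ _ _ (Ne.symm hjk) (Ne.symm hab)]
      simp [hjk, hab]

lemma rankGamma_mulVec_ones {m : ℕ} (hm : 1 ≤ m) :
    (rankGammaUnif m m).mulVec (rankOnes m m) = rankOnes m m := by
  have hm0 : (m : ℝ) ≠ 0 := by positivity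
  ext ⟨j, a⟩
  simp only [mulVec, dotProduct, rankOnes, mul_one, Fintype.sum_prod_type, rankGamma_sum,
    rankGamma_diag]
  simp [hm0]

lemma rankGamma_mulVec_ind {m : ℕ} (s : Fin m → Fin m)
    (hs : Function.Injective s) :
    ((m : ℝ) - 1) • (rankGammaUnif m m).mulVec (rankInd s)
      = rankInd s + (((m : ℝ) - 2) / m) • rankOnes m m := by
  ext ⟨j, a⟩
  have hm0 : (m : ℝ) ≠ 0 := by exact_mod_cast (Fin.pos j).ne'
  have h1 : (rankGammaUnif m m).mulVec (rankInd s) (j, a)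
      = ∑ k, rankGammaUnif m m (j, a) (k, s k) := by
    simp [mulVec, dotProduct, rankInd, Fintype.sum_prod_type]
  have h2 : ∑ k, (if s k = a then (1 : ℝ) else 0) = 1 := rankInd_sum_action s hs a
  simp only [Pi.smul_apply, Pi.add_apply, h1, smul_eq_mul, Finset.mul_sum, rankGamma_entry]
  rw [← Finset.mul_sum, Finset.sum_add_distrib, Finset.sum_sub_distrib, Finset.sum_sub_distrib, h2]
  simp only [Finset.sum_ite_eq', Finset.mem_univ, if_true, Finset.sum_const, Finset.card_univ,
    Fintype.card_fin, nsmul_eq_mul, rankInd, rankOnes]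
  field_simp
  ring

/-- The preimage `w_s` of `1_s` under `Γ`. -/
noncomputable def rankPre {m : ℕ} (s : Fin m → Fin m) : Fin m × Fin m → ℝ :=
  ((m : ℝ) - 1) • rankInd s - (((m : ℝ) - 2) / m) • rankOnes m m

lemma rankGamma_mulVec_pre {m : ℕ} (hm : 1 ≤ m) (s : Fin m → Fin m)
    (hs : Function.Injective s) :
    (rankGammaUnif m m).mulVec (rankPre s) = rankInd s := by
  rw [rankPre, mulVec_sub, mulVec_smul, mulVec_smul, rankGamma_mulVec_ind s hs,
    rankGamma_mulVec_ones hm, add_sub_cancel_right]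

lemma rankPre_dot {m : ℕ} (hm : 1 ≤ m) (s' s : Fin m → Fin m) :
    rankPre s' ⬝ᵥ rankInd s
      = ((m : ℝ) - 1) * ((Finset.univ.filter (fun j => s' j = s j)).card : ℝ) - (m : ℝ) + 2 := by
  have hm0 : (m : ℝ) ≠ 0 := by positivity
  have h1 : rankInd s' ⬝ᵥ rankInd s
      = ((Finset.univ.filter (fun j => s' j = s j)).card : ℝ) := by
    simp [dotProduct, rankInd, Fintype.sum_prod_type]
  have h2 : rankOnes m m ⬝ᵥ rankInd s = (m : ℝ) := by
    simp only [dotProduct, rankOnes, one_mul, Fintype.sum_prod_type, rankInd_sum_slot]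
    simp
  rw [rankPre, sub_dotProduct, smul_dotProduct, smul_dotProduct, h1, h2, smul_eq_mul, smul_eq_mul,
    div_mul_cancel₀ _ hm0]
  ring

lemma rank_pairwise {m : ℕ} (hm : 1 ≤ m)
    (G : Matrix (Fin m × Fin m) (Fin m × Fin m) ℝ)
    (hG1 : rankGammaUnif m m * G * rankGammaUnif m m = rankGammaUnif m m)
    (s s' : Fin m → Fin m) (hs : Function.Injective s) (hs' : Function.Injective s') :
    rankInd s' ⬝ᵥ G.mulVec (rankInd s)
      = ((m : ℝ) - 1) * ((Finset.univ.filter (fun j => s' j = s j)).card : ℝ) - (m : ℝ) + 2 := by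
  rw [← rankPre_dot hm]
  calc rankInd s' ⬝ᵥ G.mulVec (rankInd s)
      = (rankPre s' ᵥ* rankGammaUnif m m) ⬝ᵥ
          G.mulVec ((rankGammaUnif m m).mulVec (rankPre s)) := by
        rw [rankGamma_mulVec_pre hm s hs, ← mulVec_transpose, rankGamma_symm,
          rankGamma_mulVec_pre hm s' hs']
    _ = rankPre s' ⬝ᵥ (rankGammaUnif m m * G * rankGammaUnif m m).mulVec (rankPre s) := by
        rw [← dotProduct_mulVec, mulVec_mulVec, mulVec_mulVec, Matrix.mul_assoc]
    _ = rankPre s' ⬝ᵥ rankInd s := by rw [hG1, rankGamma_mulVec_pre hm s hs]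

/-- (Pairwise slate form and estimator formula for uniform full-ranking
logging, case ℓ = m.) With `ν` uniform over bijections `Fin m → Fin m` and `G` the
Moore–Penrose pseudoinverse of `Γ_ν`: for all rankings `s, s'`,
`1_{s'}ᵀ G 1_s = (m−1)·|{j : s'_j = s_j}| − m + 2`; in particular
`1_sᵀ G 1_s = m² − 2m + 2`; and for any distribution `π` on rankings, any ranking `s`
and any `r ∈ [−1,1]`: `q_πᵀ G (r·1_s) = r·((m−1)·Σ_j P_{t∼π}(t_j = s_j) − m + 2)`. -/
theorem uniform_full_ranking_pairwise_and_estimator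
    {m : ℕ} (hm : 1 ≤ m)
    (G : Matrix (Fin m × Fin m) (Fin m × Fin m) ℝ)
    (hG1 : rankGammaUnif m m * G * rankGammaUnif m m = rankGammaUnif m m)
    (hG2 : G * rankGammaUnif m m * G = G)
    (hG3 : (rankGammaUnif m m * G)ᵀ = rankGammaUnif m m * G)
    (hG4 : (G * rankGammaUnif m m)ᵀ = G * rankGammaUnif m m) :
    (∀ s s' : Fin m → Fin m, Function.Injective s → Function.Injective s' →
      rankInd s' ⬝ᵥ G.mulVec (rankInd s)
        = ((m : ℝ) - 1) * ((Finset.univ.filter (fun j => s' j = s j)).card : ℝ)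
          - (m : ℝ) + 2) ∧
    (∀ s : Fin m → Fin m, Function.Injective s →
      rankInd s ⬝ᵥ G.mulVec (rankInd s) = (m : ℝ) ^ 2 - 2 * (m : ℝ) + 2) ∧
    (∀ π : (Fin m → Fin m) → ℝ, (∀ t, 0 ≤ π t) →
      (∑ t : Fin m → Fin m, π t = 1) → (∀ t, 0 < π t → Function.Injective t) →
      ∀ s : Fin m → Fin m, Function.Injective s → ∀ r : ℝ, -1 ≤ r → r ≤ 1 →
        (∑ t : Fin m → Fin m, π t • rankInd t) ⬝ᵥ G.mulVec (r • rankInd s)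
          = r * (((m : ℝ) - 1) *
              (∑ j : Fin m, ∑ t : Fin m → Fin m, if t j = s j then π t else 0)
              - (m : ℝ) + 2)) := by
  have key := rank_pairwise hm G hG1
  refine ⟨key, fun s hs => ?_, fun π hπ hπ1 hπi s hs r _ _ => ?_⟩
  · rw [key s s hs hs]
    simp
    ring
  · have hterm : ∀ t, π t * (rankInd t ⬝ᵥ G.mulVec (rankInd s))
        = ((m : ℝ) - 1) * (∑ j, if t j = s j then π t else 0) - π t * ((m : ℝ) - 2) := by
      intro t
      rcases (hπ t).eq_or_lt with h0 | h0
      · simp [← h0]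
      · rw [key s t hs (hπi t h0), ← Finset.sum_filter, Finset.sum_const, nsmul_eq_mul]
        ring
    rw [mulVec_smul, dotProduct_smul, sum_dotProduct, smul_eq_mul]
    simp only [smul_dotProduct, smul_eq_mul, hterm]
    rw [Finset.sum_sub_distrib, ← Finset.mul_sum, ← Finset.sum_mul, hπ1, Finset.sum_comm]
    ring
end

section
/- (Closed form of the second-moment matrix for uniform ranking logging.) Let 1 ≤ ℓ ≤ m and let ν be the uniform distribution over rankings (injective functions Fin ℓ → Fin m). Then m(m−1)·Γ_ν = 1 1ᵀ − Σ_j 1_j 1_jᵀ − Σ_a 1_a 1_aᵀ + m·I. Equivalently, the entry of Γ_ν at row (j,a) and column (k,a') equals 1/m if j = k and a = a', equals 1/(m(m−1)) if j ≠ k and a ≠ a', and equals 0 otherwise. -/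
/-!
The proof computes the joint law of `(s j, s k)` under a uniform ranking `s`. Relabelling the
actions by a permutation is a bijection of the rankings (`gamma_relabel`), and summing an entry of
`Γ` over the column action gives the marginal entry `Γ (j,a) (j,a)` (`gamma_sum`). By
transposition invariance the `m` diagonal entries of slot `j` are equal; they sum to `1`, so each
is `1/m`. For `j ≠ k`, injectivity kills the entry with `a' = a`, and the `m - 1` remaining
entries of the row are equal (transpose two actions other than `a`) and sum to `1/m`, so each is
`1/(m(m-1))`. The matrix identity is then an entrywise comparison.
-/

open Matrix BigOperators
open scoped Classical

lemma gamma_apply {ℓ m : ℕ} (j k : Fin ℓ) (a a' : Fin m) :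
    rankGammaUnif ℓ m (j, a) (k, a')
      = (Fintype.card {s : Fin ℓ → Fin m // Function.Injective s} : ℝ)⁻¹ *
        ∑ s : {s : Fin ℓ → Fin m // Function.Injective s},
          if s.1 j = a ∧ s.1 k = a' then (1 : ℝ) else 0 := by
  simp only [rankGammaUnif, Matrix.sum_apply, Matrix.smul_apply, vecMulVec_apply, rankInd,
    smul_eq_mul, Finset.mul_sum]
  refine Finset.sum_congr rfl fun s _ => ?_
  by_cases h1 : s.1 j = a <;> by_cases h2 : s.1 k = a' <;> simp [h1, h2]

/-- Entries of `Γ` are invariant under relabelling the actions. -/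
lemma gamma_relabel {ℓ m : ℕ} (σ : Equiv.Perm (Fin m)) (j k : Fin ℓ) (a a' : Fin m) :
    rankGammaUnif ℓ m (j, σ a) (k, σ a') = rankGammaUnif ℓ m (j, a) (k, a') := by
  rw [gamma_apply, gamma_apply]
  congr 1
  symm
  refine Fintype.sum_bijective
    (fun s : {s : Fin ℓ → Fin m // Function.Injective s} =>
      (⟨σ ∘ s.1, σ.injective.comp s.2⟩ : {s : Fin ℓ → Fin m // Function.Injective s})) ?_ _ _ ?_
  · refine Finite.injective_iff_bijective.mp fun s t h => ?_
    exact Subtype.ext (σ.injective.comp_left (congrArg Subtype.val h))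
  · intro s
    simp

/-- Summing out the action shown in slot `k` leaves the marginal law of slot `j`. -/
lemma gamma_sum {ℓ m : ℕ} (j k : Fin ℓ) (a : Fin m) :
    ∑ a', rankGammaUnif ℓ m (j, a) (k, a') = rankGammaUnif ℓ m (j, a) (j, a) := by
  simp only [gamma_apply]
  rw [← Finset.mul_sum, Finset.sum_comm]
  congr 1
  refine Finset.sum_congr rfl fun s _ => ?_
  by_cases h : s.1 j = a <;> simp [h]

lemma gamma_diag {ℓ m : ℕ} (hlm : ℓ ≤ m) (j : Fin ℓ) (a : Fin m) :
    rankGammaUnif ℓ m (j, a) (j, a) = 1 / (m : ℝ) := by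
  have hm : (m : ℝ) ≠ 0 := by
    have := a.pos
    positivity
  have htot : ∑ b, rankGammaUnif ℓ m (j, b) (j, b) = 1 := by
    simp only [gamma_apply, and_self]
    rw [← Finset.mul_sum, Finset.sum_comm]
    -- rankings exist because `ℓ ≤ m`, so the normalising constant is nonzero
    have : Nonempty {s : Fin ℓ → Fin m // Function.Injective s} :=
      ⟨⟨Fin.castLE hlm, Fin.castLE_injective hlm⟩⟩
    have hc : (Fintype.card {s : Fin ℓ → Fin m // Function.Injective s} : ℝ) ≠ 0 :=
      Nat.cast_ne_zero.mpr Fintype.card_ne_zero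
    simp only [Finset.sum_ite_eq, Finset.mem_univ, if_true, Finset.sum_const, Finset.card_univ,
      nsmul_eq_mul, mul_one]
    exact inv_mul_cancel₀ hc
  have hconst : ∀ b, rankGammaUnif ℓ m (j, b) (j, b) = rankGammaUnif ℓ m (j, a) (j, a) := by
    intro b
    have := gamma_relabel (Equiv.swap a b) j j a a
    rwa [Equiv.swap_apply_left] at this
  simp only [hconst, Finset.sum_const, Finset.card_univ, Fintype.card_fin, nsmul_eq_mul] at htot
  field_simp
  linarith

lemma gamma_same_action {ℓ m : ℕ} {j k : Fin ℓ} (hjk : j ≠ k) (a : Fin m) :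
    rankGammaUnif ℓ m (j, a) (k, a) = 0 := by
  rw [gamma_apply, Finset.sum_eq_zero, mul_zero]
  intro s _
  exact if_neg fun h => hjk (s.2 (h.1.trans h.2.symm))

lemma gamma_same_slot {ℓ m : ℕ} (j : Fin ℓ) {a a' : Fin m} (h : a ≠ a') :
    rankGammaUnif ℓ m (j, a) (j, a') = 0 := by
  rw [gamma_apply, Finset.sum_eq_zero, mul_zero]
  intro s _
  exact if_neg fun hs => h (hs.1.symm.trans hs.2)

lemma gamma_off {ℓ m : ℕ} (hlm : ℓ ≤ m) {j k : Fin ℓ} (hjk : j ≠ k) {a a' : Fin m}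
    (h : a ≠ a') : rankGammaUnif ℓ m (j, a) (k, a') = 1 / ((m : ℝ) * ((m : ℝ) - 1)) := by
  have hm : 1 < m := by
    have := a.isLt
    have := a'.isLt
    have := Fin.val_ne_of_ne h
    omega
  have hm1 : (1 : ℝ) < m := by exact_mod_cast hm
  have hconst : ∀ b ∈ Finset.univ.erase a,
      rankGammaUnif ℓ m (j, a) (k, b) = rankGammaUnif ℓ m (j, a) (k, a') := by
    intro b hb
    have := gamma_relabel (Equiv.swap a' b) j k a a'
    rwa [Equiv.swap_apply_left,
      Equiv.swap_apply_of_ne_of_ne h (Finset.ne_of_mem_erase hb).symm] at this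
  have hsum := gamma_sum j k a
  rw [gamma_diag hlm, ← Finset.add_sum_erase _ _ (Finset.mem_univ a), gamma_same_action hjk,
    zero_add, Finset.sum_congr rfl hconst, Finset.sum_const,
    Finset.card_erase_of_mem (Finset.mem_univ a), Finset.card_univ, Fintype.card_fin,
    nsmul_eq_mul, Nat.cast_sub hm.le, Nat.cast_one] at hsum
  have h0 : (m : ℝ) ≠ 0 := by linarith
  have h1 : (m : ℝ) - 1 ≠ 0 := by linarith
  rw [← div_div, ← hsum]
  field_simp

lemma gamma_entry {ℓ m : ℕ} (hlm : ℓ ≤ m) (j k : Fin ℓ) (a a' : Fin m) :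
    rankGammaUnif ℓ m (j, a) (k, a')
      = if j = k ∧ a = a' then 1 / (m : ℝ)
        else if j ≠ k ∧ a ≠ a' then 1 / ((m : ℝ) * ((m : ℝ) - 1))
        else 0 := by
  by_cases hj : j = k
  · subst hj
    by_cases ha : a = a'
    · subst ha
      simpa using gamma_diag hlm j a
    · simpa [ha] using gamma_same_slot j ha
  · by_cases ha : a = a'
    · subst ha
      simpa [hj] using gamma_same_action hj a
    · rw [gamma_off hlm hj ha, if_neg (fun h => hj h.1), if_pos ⟨hj, ha⟩]

/-- (Closed form of the second-moment matrix for uniform ranking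
logging.) For `1 ≤ ℓ ≤ m` and `ν` the uniform distribution over rankings:
`m(m−1)·Γ_ν = 1 1ᵀ − Σ_j 1_j 1_jᵀ − Σ_a 1_a 1_aᵀ + m·I`. Equivalently, the entry of
`Γ_ν` at `((j,a),(k,a'))` equals `1/m` if `j = k` and `a = a'`, equals `1/(m(m−1))` if
`j ≠ k` and `a ≠ a'`, and equals `0` otherwise. -/
theorem uniform_ranking_gamma_closed_form
    {ℓ m : ℕ} (hℓ : 1 ≤ ℓ) (hlm : ℓ ≤ m) :
    ((m : ℝ) * ((m : ℝ) - 1)) • rankGammaUnif ℓ m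
      = vecMulVec (rankOnes ℓ m) (rankOnes ℓ m)
        - ∑ j : Fin ℓ, vecMulVec (rankOneJ j) (rankOneJ j)
        - ∑ a : Fin m, vecMulVec (rankOneA a) (rankOneA a)
        + (m : ℝ) • (1 : Matrix (Fin ℓ × Fin m) (Fin ℓ × Fin m) ℝ) ∧
    ∀ (j k : Fin ℓ) (a a' : Fin m),
      rankGammaUnif ℓ m (j, a) (k, a')
        = if j = k ∧ a = a' then 1 / (m : ℝ)
          else if j ≠ k ∧ a ≠ a' then 1 / ((m : ℝ) * ((m : ℝ) - 1))
          else 0 := by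
  refine ⟨?_, gamma_entry hlm⟩
  ext ⟨j, a⟩ ⟨k, a'⟩
  have hm : (m : ℝ) ≠ 0 := by
    have := a.pos
    positivity
  simp only [Matrix.smul_apply, Matrix.add_apply, Matrix.sub_apply, Matrix.sum_apply,
    vecMulVec_apply, rankOnes, rankOneJ, rankOneA, smul_eq_mul, gamma_entry hlm, Matrix.one_apply,
    Prod.mk.injEq]
  by_cases hj : j = k
  · subst hj
    by_cases ha : a = a'
    · subst ha
      simp
      field_simp
      ring
    · simp [ha]
  · by_cases ha : a = a'
    · subst ha
      simp [hj]
    · have h1 : (m : ℝ) - 1 ≠ 0 := by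
        have := a.isLt
        have := a'.isLt
        have := Fin.val_ne_of_ne ha
        have hm1 : (1 : ℝ) < m := by exact_mod_cast (by omega : 1 < m)
        linarith
      simp [hj, ha]
      field_simp
end
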